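/- Let L be a complete orthomodular lattice and let z ∈ L satisfy ⊥ < z < ⊤. Then the following are equivalent: (a) for every nontrivial complete atomic Boolean subalgebra B of L and every x ∈ L, δ_B(xᗮ) = (δ_B(x))ᗮ; (b) every element of L equals ⊥, z, zᗮ, or ⊤. -/

import Mathlib

/-- The daseinisation of `x` to a subset `B` of a complete lattice:
`δ_B(x) := sInf {y ∈ B | x ≤ y}`. -/
def das {L : Type*} [CompleteLattice L] (B : Set L) (x : L) : L :=
  sInf {y ∈ B | x ≤ y}

/-- `a` is an atom of the subset `C`: `a ∈ C`, `a ≠ ⊥`, and every element of `C`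
strictly below `a` is `⊥`. -/
def IsAtomOf {L : Type*} [CompleteLattice L] (C : Set L) (a : L) : Prop :=
  a ∈ C ∧ a ≠ ⊥ ∧ ∀ y ∈ C, y < a → y = ⊥

/-- `B` is a nontrivial complete atomic Boolean subalgebra of `L` (with respect to
the orthocomplementation `oc`). -/
def IsCABS {L : Type*} [CompleteLattice L] (oc : L → L) (B : Set L) : Prop :=
  (∀ S ⊆ B, sInf S ∈ B) ∧ (∀ S ⊆ B, sSup S ∈ B) ∧
  (∀ b ∈ B, oc b ∈ B) ∧
  (∀ p ∈ B, ∀ q ∈ B, ∀ r ∈ B,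
    p ⊓ (q ⊔ r) = (p ⊓ q) ⊔ (p ⊓ r) ∧ p ⊔ (q ⊓ r) = (p ⊔ q) ⊓ (p ⊔ r)) ∧
  (∀ b ∈ B, b = sSup {a | IsAtomOf B a ∧ a ≤ b}) ∧
  (∃ b ∈ B, b ≠ ⊥ ∧ b ≠ ⊤)

/-!
Let `B` be closed under infima. Then `δ_B(x)` is the least element of `B` above `x`. If
`δ_B(xᗮ) = δ_B(x)ᗮ`, then `xᗮ ≤ δ_B(x)ᗮ`, so `δ_B(x) ≤ x` and `x = δ_B(x) ∈ B`. Hence `δ_B` commutes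
with the orthocomplementation precisely when `B = L`. The set `{⊥, z, zᗮ, ⊤}` is itself a nontrivial
complete atomic Boolean subalgebra, and if it exhausts `L`, then any other one contains `z` or `zᗮ`,
hence is all of `L`.
-/

section Daseinisation

variable {L : Type*} [CompleteLattice L] {B : Set L}

theorem le_das (B : Set L) (x : L) : x ≤ das B x :=
  le_sInf fun _ hy => hy.2

theorem das_mem (hB : ∀ S ⊆ B, sInf S ∈ B) (x : L) : das B x ∈ B :=
  hB _ (Set.sep_subset _ _)

theorem das_univ (x : L) : das Set.univ x = x :=
  le_antisymm (sInf_le ⟨Set.mem_univ x, le_rfl⟩) (le_das _ x)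

theorem mem_of_das_compl_eq {oc : L → L} (h_anti : Antitone oc) (h_inv : Function.Involutive oc)
    (hB : ∀ S ⊆ B, sInf S ∈ B) {x : L} (hx : das B (oc x) = oc (das B x)) : x ∈ B := by
  have h_compl_le : oc x ≤ oc (das B x) := hx ▸ le_das B (oc x)
  have h_das_le : das B x ≤ x := by simpa only [h_inv _] using h_anti h_compl_le
  exact h_das_le.antisymm (le_das B x) ▸ das_mem hB x

theorem forall_das_compl_eq_iff {oc : L → L} (h_anti : Antitone oc)
    (h_inv : Function.Involutive oc) (hB : ∀ S ⊆ B, sInf S ∈ B) :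
    (∀ x, das B (oc x) = oc (das B x)) ↔ B = Set.univ := by
  constructor
  · exact fun h => Set.eq_univ_of_forall fun x => mem_of_das_compl_eq h_anti h_inv hB (h x)
  · rintro rfl x
    rw [das_univ, das_univ]

end Daseinisation

section ContextOf

variable {L : Type*} [CompleteLattice L] {oc : L → L} {a : L}

/-- The Boolean subalgebra (the "context" of topos quantum theory) generated by `a`, as an explicit
list of elements. For `a` other than `⊥` and `⊤` it is the least nontrivial complete atomic Boolean
subalgebra containing `a`. -/
def contextOf (oc : L → L) (a : L) : Set L :=
  {⊥, a, oc a, ⊤}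

namespace contextOf

theorem self_mem (oc : L → L) (a : L) : a ∈ contextOf oc a :=
  Or.inr (Or.inl rfl)

theorem finite (oc : L → L) (a : L) : (contextOf oc a).Finite :=
  Set.toFinite {⊥, a, oc a, ⊤}

theorem compl_eq (h_inv : oc (oc a) = a) : contextOf oc (oc a) = contextOf oc a := by
  rw [contextOf, contextOf, h_inv, Set.insert_comm (oc a)]

theorem infClosed (h : IsCompl a (oc a)) : InfClosed (contextOf oc a) := by
  rintro _ (rfl | rfl | rfl | rfl) _ (rfl | rfl | rfl | rfl) <;>
    simp [contextOf, h.inf_eq_bot, h.symm.inf_eq_bot]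

theorem supClosed (h : IsCompl a (oc a)) : SupClosed (contextOf oc a) := by
  rintro _ (rfl | rfl | rfl | rfl) _ (rfl | rfl | rfl | rfl) <;>
    simp [contextOf, h.sup_eq_top, h.symm.sup_eq_top]

theorem sInf_mem (h : IsCompl a (oc a)) {S : Set L} (hS : S ⊆ contextOf oc a) :
    sInf S ∈ contextOf oc a :=
  (infClosed h).sInf_mem ((finite oc a).subset hS) (by simp [contextOf]) hS

theorem sSup_mem (h : IsCompl a (oc a)) {S : Set L} (hS : S ⊆ contextOf oc a) :
    sSup S ∈ contextOf oc a :=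
  (supClosed h).sSup_mem ((finite oc a).subset hS) (by simp [contextOf]) hS

theorem compl_mem (h_compl : ∀ x, IsCompl x (oc x)) (h_inv : oc (oc a) = a) {b : L}
    (hb : b ∈ contextOf oc a) : oc b ∈ contextOf oc a := by
  have h_bot : oc ⊥ = ⊤ := eq_top_of_bot_isCompl (h_compl ⊥)
  have h_top : oc ⊤ = ⊥ := eq_bot_of_top_isCompl (h_compl ⊤)
  rcases hb with rfl | rfl | rfl | rfl <;> simp [contextOf, h_bot, h_top, h_inv]

theorem inf_sup_left (h : IsCompl a (oc a)) {p q r : L} (hp : p ∈ contextOf oc a)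
    (hq : q ∈ contextOf oc a) (hr : r ∈ contextOf oc a) :
    p ⊓ (q ⊔ r) = (p ⊓ q) ⊔ (p ⊓ r) := by
  rcases hp with rfl | rfl | rfl | rfl <;> rcases hq with rfl | rfl | rfl | rfl <;>
    rcases hr with rfl | rfl | rfl | rfl <;>
    simp [h.inf_eq_bot, h.sup_eq_top, h.symm.inf_eq_bot, h.symm.sup_eq_top]

theorem sup_inf_left (h : IsCompl a (oc a)) {p q r : L} (hp : p ∈ contextOf oc a)
    (hq : q ∈ contextOf oc a) (hr : r ∈ contextOf oc a) :
    p ⊔ (q ⊓ r) = (p ⊔ q) ⊓ (p ⊔ r) := by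
  rcases hp with rfl | rfl | rfl | rfl <;> rcases hq with rfl | rfl | rfl | rfl <;>
    rcases hr with rfl | rfl | rfl | rfl <;>
    simp [h.inf_eq_bot, h.sup_eq_top, h.symm.inf_eq_bot, h.symm.sup_eq_top]

theorem isAtomOf_self (h : Disjoint a (oc a)) (ha : a ≠ ⊥) : IsAtomOf (contextOf oc a) a := by
  refine ⟨self_mem oc a, ha, ?_⟩
  rintro y (rfl | rfl | rfl | rfl) hy
  · rfl
  · exact absurd hy (lt_irrefl _)
  · exact h.symm.eq_bot_of_le hy.le
  · exact absurd hy not_top_lt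

theorem isAtomOf_compl (h : Disjoint a (oc a)) (h_inv : oc (oc a) = a) (ha : oc a ≠ ⊥) :
    IsAtomOf (contextOf oc a) (oc a) :=
  compl_eq h_inv ▸ isAtomOf_self (h_inv.symm ▸ h.symm) ha

theorem eq_sSup_isAtomOf (h : IsCompl a (oc a)) (h_inv : oc (oc a) = a) (ha : a ≠ ⊥)
    (ha' : oc a ≠ ⊥) {b : L} (hb : b ∈ contextOf oc a) :
    b = sSup {c | IsAtomOf (contextOf oc a) c ∧ c ≤ b} := by
  have h_self {d : L} (hd : a ≤ d) : a ≤ sSup {c | IsAtomOf (contextOf oc a) c ∧ c ≤ d} :=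
    le_sSup ⟨isAtomOf_self h.disjoint ha, hd⟩
  have h_oc {d : L} (hd : oc a ≤ d) : oc a ≤ sSup {c | IsAtomOf (contextOf oc a) c ∧ c ≤ d} :=
    le_sSup ⟨isAtomOf_compl h.disjoint h_inv ha', hd⟩
  refine le_antisymm ?_ (sSup_le fun c hc => hc.2)
  rcases hb with rfl | rfl | rfl | rfl
  · exact bot_le
  · exact h_self le_rfl
  · exact h_oc le_rfl
  · exact h.sup_eq_top.ge.trans (sup_le (h_self le_top) (h_oc le_top))

theorem isCABS (h_compl : ∀ x, IsCompl x (oc x)) (h_inv : oc (oc a) = a) (ha_bot : a ≠ ⊥)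
    (ha_top : a ≠ ⊤) : IsCABS oc (contextOf oc a) := by
  have ha_compl : oc a ≠ ⊥ := fun h => ha_top (eq_top_of_isCompl_bot (h ▸ h_compl a))
  exact ⟨fun _ => sInf_mem (h_compl a), fun _ => sSup_mem (h_compl a),
    fun _ => compl_mem h_compl h_inv,
    fun _ hp _ hq _ hr =>
      ⟨inf_sup_left (h_compl a) hp hq hr, sup_inf_left (h_compl a) hp hq hr⟩,
    fun _ => eq_sSup_isAtomOf (h_compl a) h_inv ha_bot ha_compl,
    a, self_mem oc a, ha_bot, ha_top⟩

theorem subset_of_mem {B : Set L} (hB : IsCABS oc B) (ha : a ∈ B) : contextOf oc a ⊆ B := by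
  obtain ⟨h_sInf, h_sSup, h_oc, -⟩ := hB
  rintro _ (rfl | rfl | rfl | rfl)
  · exact sSup_empty (α := L) ▸ h_sSup ∅ (Set.empty_subset B)
  · exact ha
  · exact h_oc a ha
  · exact sInf_empty (α := L) ▸ h_sInf ∅ (Set.empty_subset B)

theorem eq_of_mem (h_inv : oc (oc a) = a) {b : L} (hb : b ∈ contextOf oc a) (hb_bot : b ≠ ⊥)
    (hb_top : b ≠ ⊤) : contextOf oc b = contextOf oc a := by
  rcases hb with rfl | rfl | rfl | rfl
  · exact absurd rfl hb_bot
  · rfl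
  · exact compl_eq h_inv
  · exact absurd rfl hb_top

end contextOf

theorem forall_isCABS_eq_univ_iff (h_compl : ∀ x, IsCompl x (oc x)) (h_inv : oc (oc a) = a)
    (ha_bot : a ≠ ⊥) (ha_top : a ≠ ⊤) :
    (∀ B, IsCABS oc B → B = Set.univ) ↔ contextOf oc a = Set.univ := by
  constructor
  · exact fun h => h _ (contextOf.isCABS h_compl h_inv ha_bot ha_top)
  · intro h B hB
    obtain ⟨b, hbB, hb_bot, hb_top⟩ := hB.2.2.2.2.2
    have hb : contextOf oc b = contextOf oc a :=
      contextOf.eq_of_mem h_inv (h ▸ Set.mem_univ b) hb_bot hb_top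
    exact Set.univ_subset_iff.1 (h ▸ hb ▸ contextOf.subset_of_mem hB hbB)

end ContextOf

theorem das_preserves_compl_iff_general {L : Type*} [CompleteLattice L] {oc : L → L}
    (h_compl : ∀ x, IsCompl x (oc x)) (h_anti : Antitone oc) (h_inv : Function.Involutive oc)
    {z : L} (hz_bot : z ≠ ⊥) (hz_top : z ≠ ⊤) :
    (∀ B : Set L, IsCABS oc B → ∀ x : L, das B (oc x) = oc (das B x)) ↔
      ∀ w : L, w = ⊥ ∨ w = z ∨ w = oc z ∨ w = ⊤ :=
  calc
    (∀ B : Set L, IsCABS oc B → ∀ x : L, das B (oc x) = oc (das B x))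
    _ ↔ ∀ B : Set L, IsCABS oc B → B = Set.univ :=
      forall₂_congr fun _ hB => forall_das_compl_eq_iff h_anti h_inv hB.1
    _ ↔ contextOf oc z = Set.univ := forall_isCABS_eq_univ_iff h_compl (h_inv z) hz_bot hz_top
    _ ↔ ∀ w : L, w = ⊥ ∨ w = z ∨ w = oc z ∨ w = ⊤ := Set.eq_univ_iff_forall

/-- Daseinisation preserves orthocomplements for every nontrivial complete atomic
Boolean subalgebra iff `L = {⊥, z, zᗮ, ⊤}`. -/
theorem das_preserves_compl_iff {L : Type*} [CompleteLattice L] (oc : L → L)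
    (h_inf : ∀ x : L, x ⊓ oc x = ⊥) (h_sup : ∀ x : L, x ⊔ oc x = ⊤)
    (h_anti : ∀ x y : L, x ≤ y → oc y ≤ oc x) (h_inv : ∀ x : L, oc (oc x) = x)
    (h_om : ∀ x y : L, x ≤ y → y = x ⊔ (y ⊓ oc x))
    (z : L) (hz1 : ⊥ < z) (hz2 : z < ⊤) :
    (∀ B : Set L, IsCABS oc B → ∀ x : L, das B (oc x) = oc (das B x)) ↔
    (∀ w : L, w = ⊥ ∨ w = z ∨ w = oc z ∨ w = ⊤) :=
  das_preserves_compl_iff_general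
    (fun x => IsCompl.of_eq (h_inf x) (h_sup x)) h_anti h_inv hz1.ne' hz2.ne
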